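/- Let (X,d,𝔪) be a PI space. Let E ⊂ X be an indecomposable set, and let 𝒞𝒞ᵉ(X∖E) = {G_i}_{i∈I}. Then for any index set J ⊂ I, the set E ∪ ⋃_{i∈J} G_i is also indecomposable, and P(E ∪ ⋃_{i∈J} G_i, X) ≤ P(E,X). -/

import Mathlib

open MeasureTheory Metric Filter Set ENNReal NNReal Topology

/-- A curve: a rectifiable continuous map from a compact interval into `X`,
parametrized by arc length (hence `1`-Lipschitz on `[0, len]`). -/
structure Curve (X : Type*) [MetricSpace X] where
  len : ℝ
  len_nonneg : 0 ≤ len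
  toFun : ℝ → X
  lipschitzOn : LipschitzOnWith 1 toFun (Set.Icc 0 len)

namespace Curve

variable {X : Type*} [MetricSpace X]

/-- A curve is nonconstant if it attains two distinct values. -/
def IsNonconstant (γ : Curve X) : Prop :=
  ∃ s ∈ Set.Icc (0:ℝ) γ.len, ∃ t ∈ Set.Icc (0:ℝ) γ.len, γ.toFun s ≠ γ.toFun t

/-- A curve lies in a set `W`. -/
def IsIn (γ : Curve X) (W : Set X) : Prop :=
  ∀ s ∈ Set.Icc (0:ℝ) γ.len, γ.toFun s ∈ W

end Curve

variable {X : Type*} [MetricSpace X] [MeasurableSpace X] [BorelSpace X]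

/-- The curve integral `∫_γ g ds` for an arc-length parametrized curve. -/
noncomputable def curveLintegral (g : X → ℝ≥0∞) (γ : Curve X) : ℝ≥0∞ :=
  ∫⁻ s in Set.Icc (0:ℝ) γ.len, g (γ.toFun s)

/-- The upper gradient inequality `|u(x) - u(y)| ≤ ∫_γ g ds` along a curve `γ`
with endpoints `x, y`. -/
def UpperGradIneq (g : X → ℝ≥0∞) (u : X → ℝ) (γ : Curve X) : Prop :=
  ENNReal.ofReal |u (γ.toFun 0) - u (γ.toFun γ.len)| ≤ curveLintegral g γ

/-- The 1-modulus of a family of curves. -/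
noncomputable def mod1 (μ : Measure X) (Γ : Set (Curve X)) : ℝ≥0∞ :=
  ⨅ (ρ : X → ℝ≥0∞) (_ : Measurable ρ ∧ ∀ γ ∈ Γ, 1 ≤ curveLintegral ρ γ),
    ∫⁻ x, ρ x ∂μ

/-- `g` is a 1-weak upper gradient of `u` in `W`: the upper gradient inequality
holds for all nonconstant curves in `W` outside a family of 1-modulus zero. -/
def IsWeakUpperGradientOn (μ : Measure X) (g : X → ℝ≥0∞) (u : X → ℝ) (W : Set X) : Prop :=
  Measurable g ∧
    mod1 μ {γ : Curve X | γ.IsNonconstant ∧ γ.IsIn W ∧ ¬ UpperGradIneq g u γ} = 0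

/-- `g` is a (strong) upper gradient of `u` in `X`. -/
def IsUpperGradient (g : X → ℝ≥0∞) (u : X → ℝ) : Prop :=
  Measurable g ∧ ∀ γ : Curve X, γ.IsNonconstant → UpperGradIneq g u γ

/-- `∫_W g_u dμ`: the integral over `W` of the minimal 1-weak upper gradient of `u`
in `W`, equivalently the infimum of `∫_W g dμ` over all 1-weak upper gradients `g`
of `u` in `W`. -/
noncomputable def gradEnergy (μ : Measure X) (u : X → ℝ) (W : Set X) : ℝ≥0∞ :=
  ⨅ (g : X → ℝ≥0∞) (_ : IsWeakUpperGradientOn μ g u W), ∫⁻ x in W, g x ∂μ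

/-- `u` is locally Lipschitz on `W`. -/
def LocLipschitzOn (u : X → ℝ) (W : Set X) : Prop :=
  ∀ x ∈ W, ∃ K : ℝ≥0, ∃ t ∈ nhdsWithin x W, LipschitzOnWith K u t

/-- Convergence `uᵢ → v` in `L¹_loc(W)`. -/
def TendstoL1loc (μ : Measure X) (W : Set X) (u : ℕ → X → ℝ) (v : X → ℝ) : Prop :=
  ∀ W' : Set X, IsOpen W' → IsCompact (closure W') → closure W' ⊆ W →
    Tendsto (fun i => ∫⁻ x in W', ENNReal.ofReal |u i x - v x| ∂μ) atTop (𝓝 0)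

/-- The total variation `‖Dv‖(W)` of a function `v` in an open set `W`. -/
noncomputable def variationOn (μ : Measure X) (v : X → ℝ) (W : Set X) : ℝ≥0∞ :=
  ⨅ (u : ℕ → X → ℝ) (_ : (∀ i, LocLipschitzOn (u i) W) ∧ TendstoL1loc μ W u v),
    Filter.liminf (fun i => gradEnergy μ (u i) W) Filter.atTop

/-- The total variation `‖Dv‖(A)` of a function `v` in an arbitrary set `A`. -/
noncomputable def totalVar (μ : Measure X) (v : X → ℝ) (A : Set X) : ℝ≥0∞ :=
  ⨅ (W : Set X) (_ : IsOpen W ∧ A ⊆ W), variationOn μ v W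

/-- The perimeter `P(E, A) = ‖Dχ_E‖(A)`. -/
noncomputable def perimeter (μ : Measure X) (E A : Set X) : ℝ≥0∞ :=
  totalVar μ (Set.indicator E fun _ => (1 : ℝ)) A

/-- The measure `μ` is doubling. -/
def IsDoublingMeasure (μ : Measure X) : Prop :=
  ∃ C : ℝ≥0∞, 1 ≤ C ∧ ∀ (x : X) (r : ℝ), 0 < r → μ (ball x (2 * r)) ≤ C * μ (ball x r)

/-- The space supports a (1,1)-Poincaré inequality:
`⨍_{B(x,r)} |u - u_{B(x,r)}| dμ ≤ C r ⨍_{B(x,λr)} g dμ` for every ball, every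
`u ∈ L¹_loc(X)` and every upper gradient `g` of `u` (stated here multiplied
through by the measures of the two balls). -/
def SupportsPoincare (μ : Measure X) : Prop :=
  ∃ C lam : ℝ, 0 < C ∧ 1 ≤ lam ∧
    ∀ (x : X) (r : ℝ), 0 < r → ∀ (u : X → ℝ) (g : X → ℝ≥0∞),
      (∀ (y : X) (s : ℝ), IntegrableOn u (ball y s) μ) → IsUpperGradient g u →
        μ (ball x (lam * r)) *
            ∫⁻ y in ball x r, ENNReal.ofReal |u y - ⨍ z in ball x r, u z ∂μ| ∂μ ≤
          ENNReal.ofReal (C * r) * μ (ball x r) * ∫⁻ y in ball x (lam * r), g y ∂μ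

/-- `(X, d, μ)` is a PI space: complete, doubling, supporting a (1,1)-Poincaré
inequality. -/
def IsPISpace (μ : Measure X) : Prop :=
  CompleteSpace X ∧ IsDoublingMeasure μ ∧ SupportsPoincare μ

/-- A set `E` of finite perimeter is decomposable in a Borel set `D` if there is a
partition `{F, G}` of `E ∩ D` into sets of finite perimeter in `D`, both of positive
measure, with `P(E,D) = P(F,D) + P(G,D)`. -/
def IsDecomposableIn (μ : Measure X) (E D : Set X) : Prop :=
  ∃ F G : Set X, MeasurableSet F ∧ MeasurableSet G ∧ Disjoint F G ∧ F ∪ G = E ∩ D ∧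
    perimeter μ F D < ⊤ ∧ perimeter μ G D < ⊤ ∧ 0 < μ F ∧ 0 < μ G ∧
    perimeter μ E D = perimeter μ F D + perimeter μ G D

/-- `E` is indecomposable in `D`. -/
def IsIndecomposableIn (μ : Measure X) (E D : Set X) : Prop :=
  ¬ IsDecomposableIn μ E D

/-- `{F i}_{i ∈ I}` is a (finite or countable) partition of `E` into indecomposable
Borel sets of positive measure and finite perimeter whose perimeters sum to `P(E,X)`;
this is the defining property of the essential connected components `𝒞𝒞ᵉ(E)`. -/
def IsEssentialPartition (μ : Measure X) (E : Set X) (I : Set ℕ) (F : ℕ → Set X) : Prop :=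
  (∀ i ∈ I, MeasurableSet (F i)) ∧
  (∀ i ∈ I, ∀ j ∈ I, i ≠ j → Disjoint (F i) (F j)) ∧
  (⋃ i ∈ I, F i) = E ∧
  (∀ i ∈ I, 0 < μ (F i)) ∧
  (∀ i ∈ I, perimeter μ (F i) Set.univ < ⊤) ∧
  (∀ i ∈ I, IsIndecomposableIn μ (F i) Set.univ) ∧
  perimeter μ E Set.univ = ∑' i : I, perimeter μ (F i.1) Set.univ

/-- Given a decomposition `{G i}_{i ∈ I}` of `X ∖ E` into essential connected
components, the saturation of `E`: the union of `E` and its holes, i.e. the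
components of finite measure. -/
def saturationOf (μ : Measure X) (E : Set X) (I : Set ℕ) (G : ℕ → Set X) : Set X :=
  E ∪ ⋃ (i : ℕ) (_ : i ∈ I ∧ μ (G i) < ⊤), G i

/-- The measure-theoretic boundary `∂* E`: points where both `E` and its complement
have strictly positive upper density. -/
def mtBoundary (μ : Measure X) (E : Set X) : Set X :=
  {x : X |
    0 < Filter.limsup (fun r => μ (ball x r ∩ E) / μ (ball x r)) (nhdsWithin 0 (Set.Ioi 0)) ∧
    0 < Filter.limsup (fun r => μ (ball x r \ E) / μ (ball x r)) (nhdsWithin 0 (Set.Ioi 0))}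

/-- The restricted codimension-one Hausdorff content `ℋ_R`. -/
noncomputable def codimOneContent (μ : Measure X) (R : ℝ) (A : Set X) : ℝ≥0∞ :=
  ⨅ (s : Set (X × ℝ))
    (_ : s.Countable ∧ (∀ p ∈ s, 0 < p.2 ∧ p.2 ≤ R) ∧ A ⊆ ⋃ p ∈ s, ball p.1 p.2),
    ∑' p : s, μ (ball (p : X × ℝ).1 (p : X × ℝ).2) / ENNReal.ofReal (p : X × ℝ).2

/-- The codimension-one Hausdorff measure `ℋ(A) = lim_{R → 0} ℋ_R(A)`. -/
noncomputable def codimOneHausdorff (μ : Measure X) (A : Set X) : ℝ≥0∞ :=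
  ⨆ (R : ℝ) (_ : 0 < R), codimOneContent μ R A

/-!
Perimeter is submodular, `P(A ∪ B) + P(A ∩ B) ≤ P(A) + P(B)`, because upper gradients of `u` and
`v` can be glued along `{v < u}` to upper gradients of `max u v` and `min u v`; it is also lower
semicontinuous, hence countably subadditive. Put `D = ⋃_{i ∈ J} G_i`. Since the perimeters of the
`G_i` sum to `P(Eᶜ) = P(E)`, subadditivity on `J` and on `I \ J` can lose nothing, so
`P(E) = P(D) + P(E ∪ D)`, which is the perimeter bound.

Suppose that `A, B` splits `E ∪ D`. By submodularity the additivity `P(A ∪ B) = P(A) + P(B)` passes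
to subsets of `A` and `B`, so it splits `E` as well, and `E` lies essentially in one of the pieces,
say `A`. Then `B` is essentially contained in `D`, so its perimeter adds up both with that of `A`
and with that of `(A ∪ B)ᶜ`. Taken together these force `P(B) = 0`, which the Poincaré inequality
excludes for `B` and `Bᶜ` of positive measure.
-/

section RealLine

variable {E F : Type*} [NormedAddCommGroup E] [NormedSpace ℝ E]
  [NormedAddCommGroup F] [NormedSpace ℝ F]

theorem norm_deriv_le_norm_deriv_of_eventually_norm_sub_le {f : ℝ → E} {g : ℝ → F} {f' : E}
    {g' : F} {t : ℝ} (hf : HasDerivAt f f' t) (hg : HasDerivAt g g' t)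
    (h : ∀ᶠ s in 𝓝 t, ‖f s - f t‖ ≤ ‖g s - g t‖) : ‖f'‖ ≤ ‖g'‖ := by
  refine le_of_tendsto_of_tendsto (hasDerivAt_iff_tendsto_slope.1 hf).norm
    (hasDerivAt_iff_tendsto_slope.1 hg).norm ?_
  filter_upwards [nhdsWithin_le_nhds h] with s hs
  simp only [slope_def_module, norm_smul]
  gcongr

theorem ae_norm_deriv_le_of_norm_sub_le_norm_integral [CompleteSpace F] {f : ℝ → E} {g : ℝ → F}
    {a b : ℝ} (hg : IntervalIntegrable g volume a b)
    (h : ∀ s ∈ uIcc a b, ∀ t ∈ uIcc a b, ‖f s - f t‖ ≤ ‖∫ x in t..s, g x‖) :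
    ∀ᵐ t, t ∈ uIoo a b → DifferentiableAt ℝ f t → ‖deriv f t‖ ≤ ‖g t‖ := by
  filter_upwards [hg.ae_hasDerivAt_integral] with t ht htm hft
  have htI := uIoo_subset_uIcc_self htm
  refine norm_deriv_le_norm_deriv_of_eventually_norm_sub_le hft.hasDerivAt (ht htI t htI) ?_
  filter_upwards [isOpen_Ioo.mem_nhds htm] with s hs
  simpa using h s (uIoo_subset_uIcc_self hs) t htI

theorem ae_enorm_deriv_le_of_enorm_sub_le_setLIntegral {f : ℝ → E} {g : ℝ → ℝ≥0∞} {a b : ℝ}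
    (hg : AEMeasurable g (volume.restrict (Icc a b))) (hfin : ∫⁻ x in Icc a b, g x ≠ ⊤)
    (h : ∀ s ∈ Icc a b, ∀ t ∈ Icc s b, ‖f s - f t‖ₑ ≤ ∫⁻ x in Icc s t, g x) :
    ∀ᵐ t, t ∈ Ioo a b → DifferentiableAt ℝ f t → ‖deriv f t‖ₑ ≤ g t := by
  rcases lt_or_ge b a with hba | hab
  · simp [Ioo_eq_empty_of_le hba.le]
  have hii : IntervalIntegrable (fun x => (g x).toReal) volume a b :=
    (intervalIntegrable_iff_integrableOn_Icc_of_le hab).2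
      (integrable_toReal_of_lintegral_ne_top hg hfin)
  have hlt : ∀ᵐ t, t ∈ Icc a b → g t < ⊤ :=
    (ae_restrict_iff' measurableSet_Icc).1 (ae_lt_top' hg hfin)
  have hle : ∀ s ∈ Icc a b, ∀ t ∈ Icc s b, ‖f s - f t‖ ≤ ‖∫ x in s..t, (g x).toReal‖ := by
    intro s hs t ht
    have hsub : Icc s t ⊆ Icc a b := Icc_subset_Icc hs.1 ht.2
    rw [intervalIntegral.integral_of_le ht.1, ← integral_Icc_eq_integral_Ioc,
      integral_toReal (hg.mono_set hsub)
        ((ae_restrict_iff' measurableSet_Icc).2 (hlt.mono fun x hx hxs => hx (hsub hxs))),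
      Real.norm_of_nonneg toReal_nonneg, ← toReal_enorm]
    exact toReal_mono ((lintegral_mono_set hsub).trans_lt hfin.lt_top).ne (h s hs t ht)
  have hle' : ∀ s ∈ uIcc a b, ∀ t ∈ uIcc a b, ‖f s - f t‖ ≤ ‖∫ x in t..s, (g x).toReal‖ := by
    rw [uIcc_of_le hab]
    intro s hs t ht
    rcases le_total s t with hst | hts
    · rw [intervalIntegral.integral_symm, norm_neg]
      exact hle s hs t ⟨hst, ht.2⟩
    · rw [norm_sub_rev]
      exact hle t ht s ⟨hts, hs.2⟩
  filter_upwards [ae_norm_deriv_le_of_norm_sub_le_norm_integral hii hle', hlt]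
    with t ht htlt htm hft
  rw [← toReal_le_toReal enorm_ne_top (htlt (Ioo_subset_Icc_self htm)).ne, toReal_enorm]
  exact (ht (by rwa [uIoo_of_le hab]) hft).trans_eq (Real.norm_of_nonneg toReal_nonneg)

theorem enorm_sub_le_setLIntegral_of_ae_enorm_deriv_le {f : ℝ → ℝ} {g : ℝ → ℝ≥0∞} {a b : ℝ}
    (hab : a ≤ b) (hf : AbsolutelyContinuousOnInterval f a b)
    (h : ∀ᵐ t, t ∈ Ioo a b → ‖deriv f t‖ₑ ≤ g t) :
    ‖f b - f a‖ₑ ≤ ∫⁻ t in Icc a b, g t := by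
  rw [← hf.integral_deriv_eq_sub, intervalIntegral.integral_of_le hab,
    setLIntegral_congr Ioo_ae_eq_Icc.symm, integral_Ioc_eq_integral_Ioo]
  exact (enorm_integral_le_lintegral_enorm _).trans
    (lintegral_mono_ae ((ae_restrict_iff' measurableSet_Ioo).2 h))

theorem ae_accPt_principal_of_mem (μ : Measure ℝ) [NullSingletonClass μ] (S : Set ℝ) :
    ∀ᵐ t ∂μ, t ∈ S → AccPt t (𝓟 S) := by
  have hnull : μ {t ∈ S | 𝓝[S ∩ Ioi t] t = ⊥} = 0 :=
    countable_setOfPred_isolated_right_within.measure_zero μ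
  filter_upwards [measure_eq_zero_iff_ae_notMem.1 hnull] with t ht htS
  have hne : (𝓝[S ∩ Ioi t] t).NeBot := ⟨fun hbot => ht ⟨htS, hbot⟩⟩
  rw [accPt_principal_iff_nhdsWithin]
  exact hne.mono (nhdsWithin_mono t fun x hx => ⟨hx.1, ne_of_gt hx.2⟩)

theorem ae_deriv_eq_of_eqOn (μ : Measure ℝ) [NullSingletonClass μ] {f g : ℝ → E} {S : Set ℝ}
    (h : EqOn f g S) :
    ∀ᵐ t ∂μ, t ∈ S → DifferentiableAt ℝ f t → DifferentiableAt ℝ g t → deriv f t = deriv g t := by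
  filter_upwards [ae_accPt_principal_of_mem μ S] with t ht htS hft hgt
  exact (uniqueDiffWithinAt_iff_accPt.2 (ht htS)).eq_deriv _ hft.hasDerivAt.hasDerivWithinAt
    (hgt.hasDerivAt.hasDerivWithinAt.congr h (h htS))

end RealLine

namespace Curve

variable {X : Type*} [MetricSpace X]

theorem continuousOn (γ : Curve X) : ContinuousOn γ.toFun (Icc 0 γ.len) :=
  γ.lipschitzOn.continuousOn

/-- The subcurve `γ|_[s, t]`, reparametrized to start at time `0`. -/
def restrict (γ : Curve X) {s t : ℝ} (hs : 0 ≤ s) (hst : s ≤ t) (ht : t ≤ γ.len) : Curve X where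
  len := t - s
  len_nonneg := sub_nonneg.2 hst
  toFun x := γ.toFun (s + x)
  lipschitzOn x hx y hy := by
    simpa only [edist_add_left] using
      γ.lipschitzOn (x := s + x) ⟨by linarith [hx.1], by linarith [hx.2]⟩
        (y := s + y) ⟨by linarith [hy.1], by linarith [hy.2]⟩

theorem curveLintegral_restrict (g : X → ℝ≥0∞) (γ : Curve X) {s t : ℝ}
    (hs : 0 ≤ s) (hst : s ≤ t) (ht : t ≤ γ.len) :
    curveLintegral g (γ.restrict hs hst ht) = ∫⁻ x in Icc s t, g (γ.toFun x) := by
  rw [← (measurePreserving_add_left volume s).setLIntegral_comp_preimage_emb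
    (measurableEmbedding_addLeft s)]
  simp [curveLintegral, restrict]

theorem exists_lipschitzOnWith_comp (γ : Curve X) {u : X → ℝ} (hu : LocallyLipschitz u) :
    ∃ K, LipschitzOnWith K (u ∘ γ.toFun) (Icc 0 γ.len) := by
  obtain ⟨K, hK⟩ := LocallyLipschitzOn.exists_lipschitzOnWith_of_compact
    (isCompact_Icc.image_of_continuousOn γ.continuousOn) hu.locallyLipschitzOn
  exact ⟨K * 1, hK.comp γ.lipschitzOn (mapsTo_image _ _)⟩

theorem absolutelyContinuousOnInterval_comp (γ : Curve X) {u : X → ℝ} (hu : LocallyLipschitz u) :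
    AbsolutelyContinuousOnInterval (u ∘ γ.toFun) 0 γ.len := by
  obtain ⟨K, hK⟩ := γ.exists_lipschitzOnWith_comp hu
  exact LipschitzOnWith.absolutelyContinuousOnInterval (by rwa [uIcc_of_le γ.len_nonneg])

theorem ae_differentiableAt_comp (γ : Curve X) {u : X → ℝ} (hu : LocallyLipschitz u) :
    ∀ᵐ t, t ∈ Ioo 0 γ.len → DifferentiableAt ℝ (u ∘ γ.toFun) t := by
  filter_upwards [(γ.absolutelyContinuousOnInterval_comp hu).ae_differentiableAt] with t ht htm
  exact ht (uIcc_of_le γ.len_nonneg ▸ Ioo_subset_Icc_self htm)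

variable [MeasurableSpace X]

theorem enorm_sub_le_setLIntegral_of_isUpperGradient (γ : Curve X) {u : X → ℝ} {g : X → ℝ≥0∞}
    (hg : IsUpperGradient g u) {s t : ℝ} (hs : 0 ≤ s) (hst : s ≤ t) (ht : t ≤ γ.len) :
    ‖u (γ.toFun s) - u (γ.toFun t)‖ₑ ≤ ∫⁻ x in Icc s t, g (γ.toFun x) := by
  rw [← γ.curveLintegral_restrict g hs hst ht]
  by_cases hc : (γ.restrict hs hst ht).IsNonconstant
  · simpa [UpperGradIneq, restrict, Real.enorm_eq_ofReal_abs] using hg.2 _ hc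
  · have heq : γ.toFun s = γ.toFun t := by
      by_contra hne
      exact hc ⟨0, ⟨le_rfl, sub_nonneg.2 hst⟩, t - s, ⟨sub_nonneg.2 hst, le_rfl⟩,
        by simpa [restrict] using hne⟩
    simp [heq]

variable [BorelSpace X]

theorem aemeasurable_comp {g : X → ℝ≥0∞} (hg : Measurable g) (γ : Curve X) :
    AEMeasurable (fun t => g (γ.toFun t)) (volume.restrict (Icc 0 γ.len)) :=
  hg.comp_aemeasurable (γ.continuousOn.aemeasurable measurableSet_Icc)

theorem ae_enorm_deriv_comp_le (γ : Curve X) {u : X → ℝ} {g : X → ℝ≥0∞}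
    (hu : LocallyLipschitz u) (hg : IsUpperGradient g u) (hfin : curveLintegral g γ ≠ ⊤) :
    ∀ᵐ t, t ∈ Ioo 0 γ.len → ‖deriv (u ∘ γ.toFun) t‖ₑ ≤ g (γ.toFun t) := by
  filter_upwards [γ.ae_differentiableAt_comp hu,
    ae_enorm_deriv_le_of_enorm_sub_le_setLIntegral (γ.aemeasurable_comp hg.1) hfin fun s hs t ht =>
      γ.enorm_sub_le_setLIntegral_of_isUpperGradient hg hs.1 ht.1 ht.2] with t htd ht htm
  exact ht htm (htd htm)

theorem upperGradIneq_piecewise (γ : Curve X) {u v w : X → ℝ} {g h : X → ℝ≥0∞} {S : Set X}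
    [DecidablePred (· ∈ S)]
    (hu : LocallyLipschitz u) (hv : LocallyLipschitz v) (hw : LocallyLipschitz w)
    (hg : IsUpperGradient g u) (hh : IsUpperGradient h v)
    (hgfin : curveLintegral g γ ≠ ⊤) (hhfin : curveLintegral h γ ≠ ⊤)
    (hwu : EqOn w u S) (hwv : EqOn w v Sᶜ) :
    UpperGradIneq (S.piecewise g h) w γ := by
  rw [UpperGradIneq, abs_sub_comm, ← Real.enorm_eq_ofReal_abs]
  refine enorm_sub_le_setLIntegral_of_ae_enorm_deriv_le γ.len_nonneg
    (γ.absolutelyContinuousOnInterval_comp hw) ?_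
  have hderiv_u := ae_deriv_eq_of_eqOn volume (f := w ∘ γ.toFun) (g := u ∘ γ.toFun)
    (S := γ.toFun ⁻¹' S) fun t ht => hwu ht
  have hderiv_v := ae_deriv_eq_of_eqOn volume (f := w ∘ γ.toFun) (g := v ∘ γ.toFun)
    (S := γ.toFun ⁻¹' Sᶜ) fun t ht => hwv ht
  filter_upwards [hderiv_u, hderiv_v, γ.ae_differentiableAt_comp hu,
    γ.ae_differentiableAt_comp hv, γ.ae_differentiableAt_comp hw,
    γ.ae_enorm_deriv_comp_le hu hg hgfin, γ.ae_enorm_deriv_comp_le hv hh hhfin]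
    with t hu' hv' hut hvt hwt hgt hht htm
  by_cases htS : γ.toFun t ∈ S
  · rw [hu' htS (hwt htm) (hut htm), piecewise_eq_of_mem _ _ _ htS]
    exact hgt htm
  · rw [hv' htS (hwt htm) (hvt htm), piecewise_eq_of_notMem _ _ _ htS]
    exact hht htm

end Curve

section GradEnergy

variable {X : Type*} [MetricSpace X]

theorem curveLintegral_mono {g h : X → ℝ≥0∞} (hgh : g ≤ h) (γ : Curve X) :
    curveLintegral g γ ≤ curveLintegral h γ :=
  lintegral_mono fun _ => hgh _

theorem UpperGradIneq.mono {g h : X → ℝ≥0∞} {u : X → ℝ} {γ : Curve X} (hg : UpperGradIneq g u γ)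
    (hgh : g ≤ h) : UpperGradIneq h u γ :=
  hg.trans (curveLintegral_mono hgh γ)

theorem upperGradIneq_of_curveLintegral_eq_top {g : X → ℝ≥0∞} {γ : Curve X}
    (hg : curveLintegral g γ = ⊤) (u : X → ℝ) : UpperGradIneq g u γ :=
  le_top.trans_eq hg.symm

variable [MeasurableSpace X] {μ : Measure X}

theorem mod1_mono {Γ Δ : Set (Curve X)} (h : Γ ⊆ Δ) : mod1 μ Γ ≤ mod1 μ Δ :=
  le_iInf₂ fun ρ hρ => iInf₂_le ρ ⟨hρ.1, fun γ hγ => hρ.2 γ (h hγ)⟩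

theorem gradEnergy_le_lintegral {u : X → ℝ} {g : X → ℝ≥0∞} (hg : Measurable g)
    {Γ : Set (Curve X)} (hΓ : mod1 μ Γ = 0) (h : ∀ γ ∉ Γ, UpperGradIneq g u γ) :
    gradEnergy μ u univ ≤ ∫⁻ x, g x ∂μ := by
  refine (iInf₂_le g ⟨hg, ?_⟩).trans_eq (by rw [Measure.restrict_univ])
  rw [← nonpos_iff_eq_zero, ← hΓ]
  exact mod1_mono fun γ hγ => not_imp_comm.1 (h γ) hγ.2.2

section BorelSpace

variable [BorelSpace X]

theorem mod1_setOf_curveLintegral_eq_top {ρ : X → ℝ≥0∞} (hρ : Measurable ρ)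
    (hfin : ∫⁻ x, ρ x ∂μ ≠ ⊤) : mod1 μ {γ | curveLintegral ρ γ = ⊤} = 0 := by
  refine le_antisymm (ENNReal.le_of_forall_pos_le_add fun ε hε _ => ?_) bot_le
  obtain ⟨c, hc, hcε⟩ := ENNReal.exists_nnreal_pos_mul_lt hfin (ENNReal.coe_ne_zero.2 hε.ne')
  have hadm : ∀ γ ∈ {γ : Curve X | curveLintegral ρ γ = ⊤},
      1 ≤ curveLintegral (fun x => c * ρ x) γ := by
    intro γ (hγ : curveLintegral ρ γ = ⊤)
    have hmul : curveLintegral (fun x => c * ρ x) γ = c * curveLintegral ρ γ :=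
      lintegral_const_mul'' _ (γ.aemeasurable_comp hρ)
    rw [hmul, hγ, ENNReal.mul_top (ENNReal.coe_ne_zero.2 hc.ne')]
    exact le_top
  calc mod1 μ {γ | curveLintegral ρ γ = ⊤}
      ≤ ∫⁻ x, c * ρ x ∂μ := iInf₂_le _ ⟨hρ.const_mul _, hadm⟩
    _ = c * ∫⁻ x, ρ x ∂μ := lintegral_const_mul _ hρ
    _ ≤ 0 + ε := by simpa using hcε.le

theorem exists_lintegral_lt_of_mod1_eq_zero {Γ : Set (Curve X)} (hΓ : mod1 μ Γ = 0) {ε : ℝ≥0∞}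
    (hε : ε ≠ 0) :
    ∃ ρ : X → ℝ≥0∞, Measurable ρ ∧ ∫⁻ x, ρ x ∂μ < ε ∧ ∀ γ ∈ Γ, curveLintegral ρ γ = ⊤ := by
  obtain ⟨δ, hδ, hsum⟩ := ENNReal.exists_pos_sum_of_countable' hε ℕ
  have hex : ∀ n, ∃ ρ : X → ℝ≥0∞, (Measurable ρ ∧ ∀ γ ∈ Γ, 1 ≤ curveLintegral ρ γ) ∧
      ∫⁻ x, ρ x ∂μ < δ n := fun n => by
    simpa only [mod1, iInf_lt_iff, exists_prop] using hΓ.trans_lt (hδ n)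
  choose ρ hρ hlt using hex
  refine ⟨fun x => ∑' n, ρ n x, Measurable.tsum fun n => (hρ n).1, ?_, fun γ hγ => ?_⟩
  · rw [lintegral_tsum fun n => (hρ n).1.aemeasurable]
    exact (ENNReal.tsum_le_tsum fun n => (hlt n).le).trans_lt hsum
  · have hcomm : curveLintegral (fun x => ∑' n, ρ n x) γ = ∑' n, curveLintegral (ρ n) γ :=
      lintegral_tsum fun n => γ.aemeasurable_comp (hρ n).1
    rw [hcomm, eq_top_iff, ← ENNReal.tsum_const_eq_top_of_ne_zero (α := ℕ) one_ne_zero]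
    exact ENNReal.tsum_le_tsum fun n => (hρ n).2 γ hγ

-- Adding a small function with infinite integral over each exceptional curve turns a weak upper
-- gradient into an upper gradient.
theorem gradEnergy_univ_eq_iInf_isUpperGradient (u : X → ℝ) :
    gradEnergy μ u univ = ⨅ (g : X → ℝ≥0∞) (_ : IsUpperGradient g u), ∫⁻ x, g x ∂μ := by
  refine le_antisymm (le_iInf₂ fun g hg => ?_) (le_iInf₂ fun g ⟨hg, hmod⟩ => ?_)
  · refine (iInf₂_le g ⟨hg.1, ?_⟩).trans_eq (by rw [Measure.restrict_univ])
    rw [← nonpos_iff_eq_zero]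
    exact (iInf₂_le 0 ⟨measurable_const, fun γ hγ => (hγ.2.2 (hg.2 γ hγ.1)).elim⟩).trans (by simp)
  · refine ENNReal.le_of_forall_pos_le_add fun ε hε _ => ?_
    obtain ⟨ρ, hρ, hρε, hρtop⟩ :=
      exists_lintegral_lt_of_mod1_eq_zero hmod (ENNReal.coe_ne_zero.2 hε.ne')
    have hgρ : IsUpperGradient (g + ρ) u := by
      refine ⟨hg.add hρ, fun γ hγ => ?_⟩
      by_cases hgγ : UpperGradIneq g u γ
      · exact hgγ.mono le_self_add
      · exact (upperGradIneq_of_curveLintegral_eq_top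
          (hρtop γ ⟨hγ, fun _ _ => mem_univ _, hgγ⟩) u).mono le_add_self
    refine (iInf₂_le (g + ρ) hgρ).trans ?_
    simp only [Pi.add_apply, Measure.restrict_univ]
    rw [lintegral_add_left hg]
    gcongr

theorem gradEnergy_sup_add_gradEnergy_inf_le {u v : X → ℝ} (hu : LocallyLipschitz u)
    (hv : LocallyLipschitz v) :
    gradEnergy μ (u ⊔ v) univ + gradEnergy μ (u ⊓ v) univ ≤
      gradEnergy μ u univ + gradEnergy μ v univ := by
  classical
  rw [gradEnergy_univ_eq_iInf_isUpperGradient u, gradEnergy_univ_eq_iInf_isUpperGradient v]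
  refine ENNReal.le_iInf₂_add_iInf₂ fun g hg h hh => ?_
  rw [← lintegral_add_left hg.1]
  rcases eq_or_ne (∫⁻ x, g x + h x ∂μ) ⊤ with htop | hfin
  · exact le_top.trans_eq htop.symm
  set S : Set X := {x | v x < u x}
  have hS : MeasurableSet S := measurableSet_lt hv.continuous.measurable hu.continuous.measurable
  have hΓ : mod1 μ {γ | curveLintegral (g + h) γ = ⊤} = 0 :=
    mod1_setOf_curveLintegral_eq_top (hg.1.add hh.1) hfin
  have hg_fin : ∀ γ ∉ {γ | curveLintegral (g + h) γ = ⊤}, curveLintegral g γ ≠ ⊤ :=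
    fun γ hγ => ne_top_of_le_ne_top hγ (curveLintegral_mono le_self_add γ)
  have hh_fin : ∀ γ ∉ {γ | curveLintegral (g + h) γ = ⊤}, curveLintegral h γ ≠ ⊤ :=
    fun γ hγ => ne_top_of_le_ne_top hγ (curveLintegral_mono le_add_self γ)
  have hmax := gradEnergy_le_lintegral (hg.1.piecewise hS hh.1) hΓ fun γ hγ =>
    γ.upperGradIneq_piecewise hu hv (hu.max hv) hg hh (hg_fin γ hγ) (hh_fin γ hγ)
      (fun x hx => sup_of_le_left (le_of_lt hx)) fun x hx => sup_of_le_right (not_lt.1 hx)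
  have hmin := gradEnergy_le_lintegral (hh.1.piecewise hS hg.1) hΓ fun γ hγ =>
    γ.upperGradIneq_piecewise hv hu (hu.min hv) hh hg (hh_fin γ hγ) (hg_fin γ hγ)
      (fun x hx => inf_of_le_right (le_of_lt hx)) fun x hx => inf_of_le_left (not_lt.1 hx)
  refine (add_le_add hmax hmin).trans_eq ?_
  rw [← lintegral_add_left (hg.1.piecewise hS hh.1)]
  refine lintegral_congr fun x => ?_
  by_cases hx : x ∈ S
  · simp [hx]
  · simp [hx, add_comm]

end BorelSpace

theorem gradEnergy_const (c : ℝ) : gradEnergy μ (fun _ => c) univ = 0 := by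
  have hΓ : mod1 μ ∅ = 0 :=
    nonpos_iff_eq_zero.1 ((iInf₂_le 0 ⟨measurable_const, by simp⟩).trans (by simp))
  simpa using gradEnergy_le_lintegral (u := fun _ : X => c) (g := 0) measurable_const hΓ
    fun γ _ => by simp [UpperGradIneq]

theorem gradEnergy_const_sub (c : ℝ) (u : X → ℝ) (W : Set X) :
    gradEnergy μ (fun x => c - u x) W = gradEnergy μ u W := by
  have hiff : ∀ (g : X → ℝ≥0∞) (γ : Curve X),
      UpperGradIneq g (fun x => c - u x) γ ↔ UpperGradIneq g u γ := fun g γ => by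
    rw [UpperGradIneq, UpperGradIneq, _root_.sub_sub_sub_cancel_left, abs_sub_comm]
  simp only [gradEnergy, IsWeakUpperGradientOn, hiff]

end GradEnergy

section Variation

theorem eLpNorm_le_add_of_norm_le_add {α E F G : Type*} {m : MeasurableSpace α}
    [NormedAddCommGroup E] [NormedAddCommGroup F] [NormedAddCommGroup G] {μ : Measure α}
    {p : ℝ≥0∞} (hp : 1 ≤ p) {f : α → E} {g : α → F} {h : α → G}
    (hg : AEStronglyMeasurable g μ) (hh : AEStronglyMeasurable h μ)
    (hle : ∀ x, ‖f x‖ ≤ ‖g x‖ + ‖h x‖) :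
    eLpNorm f p μ ≤ eLpNorm g p μ + eLpNorm h p μ :=
  calc eLpNorm f p μ ≤ eLpNorm (fun x => ‖g x‖ + ‖h x‖) p μ := eLpNorm_mono_real hle
    _ ≤ eLpNorm (fun x => ‖g x‖) p μ + eLpNorm (fun x => ‖h x‖) p μ :=
      eLpNorm_add_le hg.norm hh.norm hp
    _ = eLpNorm g p μ + eLpNorm h p μ := by rw [eLpNorm_norm, eLpNorm_norm]

variable {X : Type*} [MetricSpace X]

theorem locLipschitzOn_univ {u : X → ℝ} : LocLipschitzOn u univ ↔ LocallyLipschitz u := by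
  simp [LocLipschitzOn, LocallyLipschitz]

variable [MeasurableSpace X] {μ : Measure X}

theorem totalVar_univ (v : X → ℝ) : totalVar μ v univ = variationOn μ v univ := by
  refine le_antisymm (iInf₂_le univ ⟨isOpen_univ, le_rfl⟩) (le_iInf₂ fun W hW => ?_)
  rw [univ_subset_iff.1 hW.2]

/-- The relaxed energy of `v` at scale `(K, ε)`: the least energy of a locally Lipschitz function
within `L¹(K)`-distance `ε` of `v`. Its supremum over compact sets `K` and `ε ≠ 0` is the total
variation of `v`, which makes the latter accessible without choosing sequences. -/
noncomputable def approxEnergy (μ : Measure X) (v : X → ℝ) (K : Set X) (ε : ℝ≥0∞) : ℝ≥0∞ :=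
  ⨅ (u : X → ℝ) (_ : LocallyLipschitz u ∧ eLpNorm (u - v) 1 (μ.restrict K) ≤ ε),
    gradEnergy μ u univ

theorem approxEnergy_mono {v : X → ℝ} {K L : Set X} {δ ε : ℝ≥0∞} (hKL : K ⊆ L) (hδε : δ ≤ ε) :
    approxEnergy μ v K ε ≤ approxEnergy μ v L δ :=
  le_iInf₂ fun u hu => iInf₂_le u
    ⟨hu.1, (eLpNorm_mono_measure _ (Measure.restrict_mono hKL le_rfl)).trans (hu.2.trans hδε)⟩

theorem tendstoL1loc_univ_iff [WeaklyLocallyCompactSpace X] {u : ℕ → X → ℝ} {v : X → ℝ} :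
    TendstoL1loc μ univ u v ↔
      ∀ K, IsCompact K → Tendsto (fun n => eLpNorm (u n - v) 1 (μ.restrict K)) atTop (𝓝 0) := by
  simp only [eLpNorm_one_eq_lintegral_enorm, Pi.sub_apply, Real.enorm_eq_ofReal_abs]
  constructor
  · intro h K hK
    obtain ⟨W, hWo, hKW, hW⟩ := exists_isOpen_superset_and_isCompact_closure hK
    exact tendsto_of_tendsto_of_tendsto_of_le_of_le tendsto_const_nhds
      (h W hWo hW (subset_univ _)) (fun _ => zero_le) fun _ => lintegral_mono_set hKW
  · intro h W _ hW _
    exact tendsto_of_tendsto_of_tendsto_of_le_of_le tendsto_const_nhds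
      (h _ hW) (fun _ => zero_le) fun _ => lintegral_mono_set subset_closure

theorem variationOn_univ_eq_iSup [WeaklyLocallyCompactSpace X] [SigmaCompactSpace X]
    (v : X → ℝ) :
    variationOn μ v univ =
      ⨆ (q : Set X × ℝ≥0∞) (_ : IsCompact q.1 ∧ q.2 ≠ 0), approxEnergy μ v q.1 q.2 := by
  refine le_antisymm (le_of_forall_gt_imp_ge_of_dense fun c hc => ?_)
    (iSup₂_le fun q hq => le_iInf₂ fun u hu => ?_)
  · let K := CompactExhaustion.choice X
    have hex : ∀ n : ℕ, ∃ u : X → ℝ, (LocallyLipschitz u ∧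
        eLpNorm (u - v) 1 (μ.restrict (K n)) ≤ ((n + 1 : ℕ) : ℝ≥0∞)⁻¹) ∧
        gradEnergy μ u univ < c := fun n => by
      simpa only [approxEnergy, iInf_lt_iff, exists_prop] using
        (le_iSup₂ (f := fun (q : Set X × ℝ≥0∞) (_ : IsCompact q.1 ∧ q.2 ≠ 0) =>
          approxEnergy μ v q.1 q.2) (K n, ((n + 1 : ℕ) : ℝ≥0∞)⁻¹)
          ⟨K.isCompact n, ENNReal.inv_ne_zero.2 (natCast_ne_top _)⟩).trans_lt hc
    choose u hu huc using hex
    have huv : TendstoL1loc μ univ u v := tendstoL1loc_univ_iff.2 fun L hL => by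
      obtain ⟨m, hm⟩ := K.exists_superset_of_isCompact hL
      refine tendsto_of_tendsto_of_tendsto_of_le_of_le' tendsto_const_nhds
        (ENNReal.tendsto_inv_nat_nhds_zero.comp (tendsto_add_atTop_nat 1))
        (Eventually.of_forall fun _ => zero_le) ?_
      filter_upwards [eventually_ge_atTop m] with n hn
      exact (eLpNorm_mono_measure _ (Measure.restrict_mono (hm.trans (K.subset hn)) le_rfl)).trans
        (hu n).2
    calc variationOn μ v univ
        ≤ liminf (fun n => gradEnergy μ (u n) univ) atTop :=
          iInf₂_le u ⟨fun n => locLipschitzOn_univ.2 (hu n).1, huv⟩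
      _ ≤ liminf (fun _ => c) atTop :=
          liminf_le_liminf (Eventually.of_forall fun n => (huc n).le)
      _ = c := liminf_const c
  · refine le_liminf_of_le (by isBoundedDefault) ?_
    filter_upwards [(tendstoL1loc_univ_iff.1 hu.2 _ hq.1).eventually_le_const
      (pos_iff_ne_zero.2 hq.2)] with n hn
    exact iInf₂_le (u n) ⟨locLipschitzOn_univ.1 (hu.1 n), hn⟩

theorem approxEnergy_le_variationOn [WeaklyLocallyCompactSpace X] [SigmaCompactSpace X]
    (v : X → ℝ) {K : Set X} {ε : ℝ≥0∞} (hK : IsCompact K) (hε : ε ≠ 0) :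
    approxEnergy μ v K ε ≤ variationOn μ v univ := by
  rw [variationOn_univ_eq_iSup]
  exact le_iSup₂ (f := fun (q : Set X × ℝ≥0∞) (_ : IsCompact q.1 ∧ q.2 ≠ 0) =>
    approxEnergy μ v q.1 q.2) (K, ε) ⟨hK, hε⟩

theorem variationOn_congr_ae {v w : X → ℝ} (h : v =ᵐ[μ] w) (W : Set X) :
    variationOn μ v W = variationOn μ w W := by
  have hint : ∀ (u : X → ℝ) (W' : Set X), ∫⁻ x in W', ENNReal.ofReal |u x - v x| ∂μ =
      ∫⁻ x in W', ENNReal.ofReal |u x - w x| ∂μ := fun u W' =>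
    lintegral_congr_ae ((ae_restrict_of_ae h).mono fun x hx => by simp only [hx])
  simp only [variationOn, TendstoL1loc, hint]

theorem variationOn_const_sub_le (c : ℝ) (v : X → ℝ) (W : Set X) :
    variationOn μ (fun x => c - v x) W ≤ variationOn μ v W := by
  refine le_iInf₂ fun u ⟨hu, huv⟩ => ?_
  refine (iInf₂_le (fun n x => c - u n x) ⟨fun n x hx => ?_, fun W' hWo hWc hWW => ?_⟩).trans_eq
    (by simp only [gradEnergy_const_sub])
  · obtain ⟨K, t, ht, hK⟩ := hu n x hx
    exact ⟨1 * K, t, ht, (IsometryEquiv.subLeft c).isometry.lipschitz.comp_lipschitzOnWith hK⟩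
  · simpa only [_root_.sub_sub_sub_cancel_left, abs_sub_comm] using huv W' hWo hWc hWW

theorem variationOn_const (c : ℝ) : variationOn μ (fun _ => c) univ = 0 := by
  rw [← nonpos_iff_eq_zero]
  refine (iInf₂_le (fun _ _ => c)
    ⟨fun _ => locLipschitzOn_univ.2 (LocallyLipschitz.const c), fun _ _ _ _ => by simp⟩).trans ?_
  simp [gradEnergy_const]

section BorelSpace

variable [BorelSpace X]

theorem approxEnergy_add_le {v w : X → ℝ} {K : Set X} {δ ε : ℝ≥0∞}
    (hv : AEStronglyMeasurable v μ) (hw : AEStronglyMeasurable w μ)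
    (hwv : eLpNorm (w - v) 1 (μ.restrict K) ≤ δ) :
    approxEnergy μ v K (ε + δ) ≤ approxEnergy μ w K ε := by
  refine le_iInf₂ fun u hu => iInf₂_le u ⟨hu.1, ?_⟩
  have huw : AEStronglyMeasurable (u - w) (μ.restrict K) :=
    (hu.1.continuous.aestronglyMeasurable.sub hw).restrict
  rw [← sub_add_sub_cancel u w v]
  exact (eLpNorm_add_le huw (hw.sub hv).restrict le_rfl).trans (add_le_add hu.2 hwv)

theorem variationOn_le_of_forall_exists_eLpNorm_sub_le [WeaklyLocallyCompactSpace X]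
    [SigmaCompactSpace X] {v : X → ℝ} {c : ℝ≥0∞} (hv : AEStronglyMeasurable v μ)
    (h : ∀ K, IsCompact K → ∀ ε : ℝ≥0∞, ε ≠ 0 → ∃ w : X → ℝ, AEStronglyMeasurable w μ ∧
      eLpNorm (w - v) 1 (μ.restrict K) ≤ ε ∧ variationOn μ w univ ≤ c) :
    variationOn μ v univ ≤ c := by
  rw [variationOn_univ_eq_iSup]
  refine iSup₂_le fun ⟨K, ε⟩ ⟨hK, hε⟩ => ?_
  have hε2 : ε / 2 ≠ 0 := (ENNReal.half_pos hε).ne'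
  obtain ⟨w, hw, hwv, hwc⟩ := h K hK (ε / 2) hε2
  calc approxEnergy μ v K ε = approxEnergy μ v K (ε / 2 + ε / 2) := by rw [ENNReal.add_halves]
    _ ≤ approxEnergy μ w K (ε / 2) := approxEnergy_add_le hv hw hwv
    _ ≤ variationOn μ w univ := approxEnergy_le_variationOn w hK hε2
    _ ≤ c := hwc

theorem approxEnergy_sup_add_approxEnergy_inf_le {v₁ v₂ : X → ℝ} {K : Set X} {ε₁ ε₂ : ℝ≥0∞}
    (hv₁ : AEStronglyMeasurable v₁ μ) (hv₂ : AEStronglyMeasurable v₂ μ) :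
    approxEnergy μ (v₁ ⊔ v₂) K (ε₁ + ε₂) + approxEnergy μ (v₁ ⊓ v₂) K (ε₁ + ε₂) ≤
      approxEnergy μ v₁ K ε₁ + approxEnergy μ v₂ K ε₂ := by
  refine ENNReal.le_iInf₂_add_iInf₂ fun u₁ hu₁ u₂ hu₂ => ?_
  have hm₁ : AEStronglyMeasurable (u₁ - v₁) (μ.restrict K) :=
    (hu₁.1.continuous.aestronglyMeasurable.sub hv₁).restrict
  have hm₂ : AEStronglyMeasurable (u₂ - v₂) (μ.restrict K) :=
    (hu₂.1.continuous.aestronglyMeasurable.sub hv₂).restrict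
  have hsup : eLpNorm (u₁ ⊔ u₂ - v₁ ⊔ v₂) 1 (μ.restrict K) ≤ ε₁ + ε₂ :=
    (eLpNorm_le_add_of_norm_le_add le_rfl hm₁ hm₂ fun x =>
      (abs_max_sub_max_le_max (u₁ x) (u₂ x) (v₁ x) (v₂ x)).trans
        (max_le_add_of_nonneg (abs_nonneg _) (abs_nonneg _))).trans (add_le_add hu₁.2 hu₂.2)
  have hinf : eLpNorm (u₁ ⊓ u₂ - v₁ ⊓ v₂) 1 (μ.restrict K) ≤ ε₁ + ε₂ :=
    (eLpNorm_le_add_of_norm_le_add le_rfl hm₁ hm₂ fun x =>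
      (abs_min_sub_min_le_max (u₁ x) (u₂ x) (v₁ x) (v₂ x)).trans
        (max_le_add_of_nonneg (abs_nonneg _) (abs_nonneg _))).trans (add_le_add hu₁.2 hu₂.2)
  exact (add_le_add (iInf₂_le _ ⟨hu₁.1.max hu₂.1, hsup⟩) (iInf₂_le _ ⟨hu₁.1.min hu₂.1, hinf⟩)).trans
    (gradEnergy_sup_add_gradEnergy_inf_le hu₁.1 hu₂.1)

theorem variationOn_sup_add_variationOn_inf_le [WeaklyLocallyCompactSpace X]
    [SigmaCompactSpace X] {v₁ v₂ : X → ℝ}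
    (hv₁ : AEStronglyMeasurable v₁ μ) (hv₂ : AEStronglyMeasurable v₂ μ) :
    variationOn μ (v₁ ⊔ v₂) univ + variationOn μ (v₁ ⊓ v₂) univ ≤
      variationOn μ v₁ univ + variationOn μ v₂ univ := by
  have hscale : ∃ q : Set X × ℝ≥0∞, IsCompact q.1 ∧ q.2 ≠ 0 :=
    ⟨(∅, 1), isCompact_empty, one_ne_zero⟩
  rw [variationOn_univ_eq_iSup (v₁ ⊔ v₂), variationOn_univ_eq_iSup (v₁ ⊓ v₂)]
  refine ENNReal.biSup_add_biSup_le' hscale hscale fun ⟨K₁, ε₁⟩ ⟨hK₁, hε₁⟩ ⟨K₂, ε₂⟩ ⟨hK₂, hε₂⟩ => ?_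
  set δ : ℝ≥0∞ := min ε₁ ε₂ / 2
  have hδ : δ ≠ 0 := by simp [δ, hε₁, hε₂]
  have hδδ : δ + δ = min ε₁ ε₂ := ENNReal.add_halves _
  calc approxEnergy μ (v₁ ⊔ v₂) K₁ ε₁ + approxEnergy μ (v₁ ⊓ v₂) K₂ ε₂
      ≤ approxEnergy μ (v₁ ⊔ v₂) (K₁ ∪ K₂) (δ + δ) +
          approxEnergy μ (v₁ ⊓ v₂) (K₁ ∪ K₂) (δ + δ) :=
        add_le_add (approxEnergy_mono subset_union_left (hδδ.trans_le (min_le_left _ _)))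
          (approxEnergy_mono subset_union_right (hδδ.trans_le (min_le_right _ _)))
    _ ≤ approxEnergy μ v₁ (K₁ ∪ K₂) δ + approxEnergy μ v₂ (K₁ ∪ K₂) δ :=
        approxEnergy_sup_add_approxEnergy_inf_le hv₁ hv₂
    _ ≤ variationOn μ v₁ univ + variationOn μ v₂ univ :=
        add_le_add (approxEnergy_le_variationOn v₁ (hK₁.union hK₂) hδ)
          (approxEnergy_le_variationOn v₂ (hK₁.union hK₂) hδ)

end BorelSpace

end Variation

section Perimeter

variable {X : Type*} [MetricSpace X] [MeasurableSpace X] {μ : Measure X}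

theorem perimeter_univ_eq_variationOn (A : Set X) :
    perimeter μ A univ = variationOn μ (A.indicator fun _ => 1) univ :=
  totalVar_univ _

theorem perimeter_congr_ae {A B : Set X} (h : A =ᵐ[μ] B) :
    perimeter μ A univ = perimeter μ B univ := by
  rw [perimeter_univ_eq_variationOn, perimeter_univ_eq_variationOn,
    variationOn_congr_ae (indicator_ae_eq_of_ae_eq_set h)]

theorem perimeter_compl (A : Set X) : perimeter μ Aᶜ univ = perimeter μ A univ := by
  have hle : ∀ B : Set X, perimeter μ Bᶜ univ ≤ perimeter μ B univ := fun B => by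
    rw [perimeter_univ_eq_variationOn, perimeter_univ_eq_variationOn, indicator_compl]
    exact variationOn_const_sub_le 1 _ univ
  exact (hle A).antisymm (by simpa only [compl_compl] using hle Aᶜ)

theorem perimeter_empty : perimeter μ (∅ : Set X) univ = 0 := by
  rw [perimeter_univ_eq_variationOn, indicator_empty]
  exact variationOn_const 0

theorem perimeter_univ_univ : perimeter μ (univ : Set X) univ = 0 := by
  simpa only [compl_empty, perimeter_empty] using perimeter_compl (μ := μ) (∅ : Set X)

variable [BorelSpace X] [WeaklyLocallyCompactSpace X] [SigmaCompactSpace X]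

theorem perimeter_union_add_perimeter_inter_le {A B : Set X}
    (hA : MeasurableSet A) (hB : MeasurableSet B) :
    perimeter μ (A ∪ B) univ + perimeter μ (A ∩ B) univ ≤
      perimeter μ A univ + perimeter μ B univ := by
  have hsup : (A ∪ B).indicator (fun _ => (1 : ℝ)) =
      A.indicator (fun _ => 1) ⊔ B.indicator fun _ => 1 := by
    ext x
    by_cases hxA : x ∈ A <;> by_cases hxB : x ∈ B <;> simp [hxA, hxB]
  have hinf : (A ∩ B).indicator (fun _ => (1 : ℝ)) =
      A.indicator (fun _ => 1) ⊓ B.indicator fun _ => 1 := by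
    ext x
    by_cases hxA : x ∈ A <;> by_cases hxB : x ∈ B <;> simp [hxA, hxB]
  simp only [perimeter_univ_eq_variationOn, hsup, hinf]
  exact variationOn_sup_add_variationOn_inf_le
    (aestronglyMeasurable_const.indicator hA) (aestronglyMeasurable_const.indicator hB)

theorem perimeter_union_le {A B : Set X} (hA : MeasurableSet A) (hB : MeasurableSet B) :
    perimeter μ (A ∪ B) univ ≤ perimeter μ A univ + perimeter μ B univ :=
  le_self_add.trans (perimeter_union_add_perimeter_inter_le hA hB)

theorem perimeter_finset_biUnion_le {ι : Type*} {A : ι → Set X}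
    (hA : ∀ i, MeasurableSet (A i)) (s : Finset ι) :
    perimeter μ (⋃ i ∈ s, A i) univ ≤ ∑ i ∈ s, perimeter μ (A i) univ := by
  classical
  induction s using Finset.induction_on with
  | empty => simp [perimeter_empty]
  | insert i s hi ih =>
    rw [Finset.set_biUnion_insert, Finset.sum_insert hi]
    exact (perimeter_union_le (hA i) (s.measurableSet_biUnion fun j _ => hA j)).trans
      (add_le_add_right ih _)

theorem perimeter_le_of_forall_exists_measure_symmDiff_le {A : Set X} {c : ℝ≥0∞}
    (hA : MeasurableSet A)
    (h : ∀ K, IsCompact K → ∀ ε : ℝ≥0∞, ε ≠ 0 → ∃ B, MeasurableSet B ∧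
      μ (symmDiff B A ∩ K) ≤ ε ∧ perimeter μ B univ ≤ c) :
    perimeter μ A univ ≤ c := by
  rw [perimeter_univ_eq_variationOn]
  refine variationOn_le_of_forall_exists_eLpNorm_sub_le
    (aestronglyMeasurable_const.indicator hA) fun K hK ε hε => ?_
  obtain ⟨B, hB, hBA, hBc⟩ := h K hK ε hε
  refine ⟨B.indicator fun _ => 1, aestronglyMeasurable_const.indicator hB, ?_,
    (perimeter_univ_eq_variationOn B).symm.trans_le hBc⟩
  calc eLpNorm (B.indicator (fun _ => (1 : ℝ)) - A.indicator fun _ => 1) 1 (μ.restrict K)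
      = μ (symmDiff B A ∩ K) := by
        rw [eLpNorm_indicator_sub_indicator,
          eLpNorm_indicator_const (hB.symmDiff hA) one_ne_zero one_ne_top,
          Measure.restrict_apply (hB.symmDiff hA)]
        simp
    _ ≤ ε := hBA

theorem perimeter_iUnion_le [IsFiniteMeasureOnCompacts μ] {ι : Type*} [Countable ι]
    {A : ι → Set X} (hA : ∀ i, MeasurableSet (A i)) :
    perimeter μ (⋃ i, A i) univ ≤ ∑' i, perimeter μ (A i) univ := by
  refine perimeter_le_of_forall_exists_measure_symmDiff_le (.iUnion hA) fun K hK ε hε => ?_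
  have hT : ∀ s : Finset ι, MeasurableSet (⋃ i ∈ s, A i) := fun s =>
    s.measurableSet_biUnion fun i _ => hA i
  set R : Finset ι → Set X := fun s => ((⋃ i, A i) \ ⋃ i ∈ s, A i) ∩ K
  have hRm : ∀ s, NullMeasurableSet (R s) μ := fun s =>
    (((MeasurableSet.iUnion hA).diff (hT s)).inter hK.measurableSet).nullMeasurableSet
  have hRanti : Antitone R := fun s t hst =>
    inter_subset_inter_left K (sdiff_subset_sdiff_right (biUnion_subset_biUnion_left hst))
  have hRempty : ⋂ s, R s = ∅ := by
    rw [← iInter_inter, ← sdiff_iUnion, ← iUnion_eq_iUnion_finset, sdiff_self,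
      empty_inter]
  have hlim : Tendsto (μ ∘ R) atTop (𝓝 0) := by
    simpa only [hRempty, measure_empty] using tendsto_measure_iInter_atTop hRm hRanti
      ⟨∅, measure_ne_top_of_subset inter_subset_right hK.measure_lt_top.ne⟩
  obtain ⟨s, hs⟩ := (hlim.eventually_le_const (pos_iff_ne_zero.2 hε)).exists
  refine ⟨⋃ i ∈ s, A i, hT s, ?_, (perimeter_finset_biUnion_le hA s).trans (ENNReal.sum_le_tsum s)⟩
  rwa [symmDiff_of_le (iUnion₂_subset fun i _ => subset_iUnion A i)]

theorem perimeter_biUnion_le [IsFiniteMeasureOnCompacts μ] {ι : Type*} {I : Set ι}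
    (hI : I.Countable) {A : ι → Set X} (hA : ∀ i ∈ I, MeasurableSet (A i)) :
    perimeter μ (⋃ i ∈ I, A i) univ ≤ ∑' i : I, perimeter μ (A i) univ := by
  have := hI.to_subtype
  rw [biUnion_eq_iUnion]
  exact perimeter_iUnion_le fun i : I => hA i i.2

theorem perimeter_biUnion_eq_add_of_tsum_le [IsFiniteMeasureOnCompacts μ] {ι : Type*}
    {I J : Set ι} (hI : I.Countable) {A : ι → Set X} (hA : ∀ i ∈ I, MeasurableSet (A i))
    (h : ∑' i : I, perimeter μ (A i) univ ≤ perimeter μ (⋃ i ∈ I, A i) univ) (hJ : J ⊆ I) :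
    perimeter μ (⋃ i ∈ I, A i) univ =
      perimeter μ (⋃ i ∈ J, A i) univ + perimeter μ (⋃ i ∈ I \ J, A i) univ := by
  have hAJ : ∀ i ∈ J, MeasurableSet (A i) := fun i hi => hA i (hJ hi)
  have hAJ' : ∀ i ∈ I \ J, MeasurableSet (A i) := fun i hi => hA i hi.1
  have hIJ : J ∪ I \ J = I := union_sdiff_cancel hJ
  apply le_antisymm
  · rw [← hIJ, biUnion_union, hIJ]
    exact perimeter_union_le (.biUnion (hI.mono hJ) hAJ) (.biUnion (hI.mono sdiff_subset) hAJ')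
  · calc perimeter μ (⋃ i ∈ J, A i) univ + perimeter μ (⋃ i ∈ I \ J, A i) univ
        ≤ ∑' i : J, perimeter μ (A i) univ + ∑' i : ↑(I \ J), perimeter μ (A i) univ :=
          add_le_add (perimeter_biUnion_le (hI.mono hJ) hAJ)
            (perimeter_biUnion_le (hI.mono sdiff_subset) hAJ')
      _ = ∑' i : ↑(J ∪ I \ J), perimeter μ (A i) univ :=
          (Summable.tsum_union_disjoint (f := fun i => perimeter μ (A i) univ)
            disjoint_sdiff_right ENNReal.summable ENNReal.summable).symm
      _ ≤ perimeter μ (⋃ i ∈ I, A i) univ := by rwa [hIJ]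

end Perimeter

section Poincare

theorem min_measure_compl_le_eLpNorm_indicator_sub_const {α : Type*} {m : MeasurableSpace α}
    {μ : Measure α} {A : Set α} (hA : MeasurableSet A) (c : ℝ) :
    min (μ A) (μ Aᶜ) ≤ eLpNorm ((A.indicator fun _ => (1 : ℝ)) - fun _ => c) 1 μ := by
  have hone : 1 ≤ ‖1 - c‖ₑ + ‖0 - c‖ₑ := by
    simpa using enorm_sub_le (a := 1 - c) (b := 0 - c)
  calc min (μ A) (μ Aᶜ) ≤ (‖1 - c‖ₑ + ‖0 - c‖ₑ) * min (μ A) (μ Aᶜ) :=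
        le_mul_of_one_le_left' hone
    _ ≤ ‖1 - c‖ₑ * μ A + ‖0 - c‖ₑ * μ Aᶜ := by
        rw [add_mul]
        exact add_le_add (mul_le_mul_right (min_le_left _ _) _)
          (mul_le_mul_right (min_le_right _ _) _)
    _ = eLpNorm ((A.indicator fun _ => (1 : ℝ)) - fun _ => c) 1 μ := by
        rw [eLpNorm_one_eq_lintegral_enorm, ← lintegral_add_compl _ hA, ← setLIntegral_const,
          ← setLIntegral_const]
        congr 1
        · exact setLIntegral_congr_fun hA fun x hx => by simp [indicator_of_mem hx]
        · exact setLIntegral_congr_fun hA.compl fun x hx => by simp [indicator_of_notMem hx]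

theorem min_measure_compl_le_eLpNorm_sub_indicator_add {α : Type*} {m : MeasurableSpace α}
    {μ : Measure α} {A : Set α} (hA : MeasurableSet A) {u : α → ℝ}
    (hu : AEStronglyMeasurable u μ) (c : ℝ) :
    min (μ A) (μ Aᶜ) ≤
      eLpNorm (u - A.indicator fun _ => 1) 1 μ + eLpNorm (u - fun _ => c) 1 μ := by
  set v : α → ℝ := A.indicator fun _ => 1
  have hv : AEStronglyMeasurable v μ := aestronglyMeasurable_const.indicator hA
  calc min (μ A) (μ Aᶜ) ≤ eLpNorm (v - fun _ => c) 1 μ :=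
        min_measure_compl_le_eLpNorm_indicator_sub_const hA c
    _ = eLpNorm (v - u + (u - fun _ => c)) 1 μ := by rw [sub_add_sub_cancel]
    _ ≤ eLpNorm (v - u) 1 μ + eLpNorm (u - fun _ => c) 1 μ :=
        eLpNorm_add_le (hv.sub hu) (hu.sub aestronglyMeasurable_const) le_rfl
    _ = eLpNorm (u - v) 1 μ + eLpNorm (u - fun _ => c) 1 μ := by rw [eLpNorm_sub_comm]

variable {X : Type*} [MetricSpace X] [MeasurableSpace X] [BorelSpace X] [ProperSpace X]
  {μ : Measure X} [IsFiniteMeasureOnCompacts μ]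

theorem SupportsPoincare.exists_eLpNorm_sub_average_le (h : SupportsPoincare μ) :
    ∃ C lam : ℝ, 0 < C ∧ 1 ≤ lam ∧ ∀ (x : X) (r : ℝ), 0 < r → μ (ball x r) ≠ 0 →
      ∀ u : X → ℝ, LocallyLipschitz u →
        μ (ball x (lam * r)) *
            eLpNorm (u - fun _ => ⨍ z in ball x r, u z ∂μ) 1 (μ.restrict (ball x r)) ≤
          ENNReal.ofReal (C * r) * μ (ball x r) * gradEnergy μ u univ := by
  obtain ⟨C, lam, hC, hlam, hP⟩ := h
  refine ⟨C, lam, hC, hlam, fun x r hr hμ u hu => ?_⟩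
  have hint : ∀ (y : X) (s : ℝ), IntegrableOn u (ball y s) μ := fun y s =>
    (hu.continuous.continuousOn.integrableOn_compact (isCompact_closedBall y s)).mono_set
      ball_subset_closedBall
  set k := ENNReal.ofReal (C * r) * μ (ball x r)
  have hk : k ≠ 0 := mul_ne_zero (ENNReal.ofReal_pos.2 (mul_pos hC hr)).ne' hμ
  have hk' : k ≠ ⊤ := ENNReal.mul_ne_top ENNReal.ofReal_ne_top measure_ball_lt_top.ne
  simp only [gradEnergy_univ_eq_iInf_isUpperGradient, ENNReal.mul_iInf_of_ne hk hk',
    eLpNorm_one_eq_lintegral_enorm, Pi.sub_apply, Real.enorm_eq_ofReal_abs]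
  exact le_iInf₂ fun g hg => (hP x r hr u g hint hg).trans
    (mul_le_mul_right (setLIntegral_le_lintegral _ _) _)

theorem SupportsPoincare.exists_relative_isoperimetric_add (h : SupportsPoincare μ) :
    ∃ C lam : ℝ, 1 ≤ lam ∧ ∀ (x : X) (r : ℝ), 0 < r → ∀ A : Set X, MeasurableSet A →
      ∀ ε : ℝ≥0∞, ε ≠ 0 →
        μ (ball x (lam * r)) * min (μ (A ∩ ball x r)) (μ (Aᶜ ∩ ball x r)) ≤
          μ (ball x (lam * r)) * ε +
            ENNReal.ofReal (C * r) * μ (ball x r) * perimeter μ A univ := by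
  obtain ⟨C, lam, hC, hlam, hP⟩ := h.exists_eLpNorm_sub_average_le
  refine ⟨C, lam, hlam, fun x r hr A hA ε hε => ?_⟩
  rcases eq_or_ne (μ (ball x r)) 0 with hμ | hμ
  · simp [measure_mono_null inter_subset_right hμ]
  set B := ball x r
  set M := μ (ball x (lam * r))
  set m := min (μ (A ∩ B)) (μ (Aᶜ ∩ B))
  set k := ENNReal.ofReal (C * r) * μ B
  have hk : k ≠ 0 := mul_ne_zero (ENNReal.ofReal_pos.2 (mul_pos hC hr)).ne' hμ
  have hk' : k ≠ ⊤ := ENNReal.mul_ne_top ENNReal.ofReal_ne_top measure_ball_lt_top.ne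
  set v : X → ℝ := A.indicator fun _ => 1
  have hu : ∀ u, LocallyLipschitz u → M * m ≤
      M * eLpNorm (u - v) 1 (μ.restrict B) + k * gradEnergy μ u univ := fun u hu => by
    have hm : m ≤ eLpNorm (u - v) 1 (μ.restrict B) +
        eLpNorm (u - fun _ => ⨍ z in B, u z ∂μ) 1 (μ.restrict B) := by
      simpa only [Measure.restrict_apply hA, Measure.restrict_apply hA.compl] using
        min_measure_compl_le_eLpNorm_sub_indicator_add (μ := μ.restrict B) hA
          hu.continuous.aestronglyMeasurable (⨍ z in B, u z ∂μ)
    refine (mul_le_mul_right hm M).trans ?_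
    rw [mul_add]
    exact add_le_add_right (hP x r hr hμ u hu) _
  calc M * m ≤ M * ε + k * approxEnergy μ v (closedBall x r) ε := by
        simp only [approxEnergy, ENNReal.mul_iInf_of_ne hk hk', ENNReal.add_iInf₂]
        exact le_iInf₂ fun u ⟨huLip, huv⟩ => (hu u huLip).trans (add_le_add_left
          (mul_le_mul_right ((eLpNorm_mono_measure _ (Measure.restrict_mono
            ball_subset_closedBall le_rfl)).trans huv) M) _)
    _ ≤ M * ε + k * perimeter μ A univ := by
        rw [perimeter_univ_eq_variationOn]
        gcongr
        exact approxEnergy_le_variationOn v (isCompact_closedBall x r) hε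

theorem SupportsPoincare.exists_relative_isoperimetric (h : SupportsPoincare μ) :
    ∃ C lam : ℝ, 1 ≤ lam ∧ ∀ (x : X) (r : ℝ), 0 < r → ∀ A : Set X, MeasurableSet A →
      μ (ball x (lam * r)) * min (μ (A ∩ ball x r)) (μ (Aᶜ ∩ ball x r)) ≤
        ENNReal.ofReal (C * r) * μ (ball x r) * perimeter μ A univ := by
  obtain ⟨C, lam, hlam, hiso⟩ := h.exists_relative_isoperimetric_add
  refine ⟨C, lam, hlam, fun x r hr A hA => ?_⟩
  set M := μ (ball x (lam * r))
  set p := ENNReal.ofReal (C * r) * μ (ball x r) * perimeter μ A univ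
  have hlim : Tendsto (fun ε => M * ε + p) (𝓝[>] 0) (𝓝 (M * 0 + p)) :=
    ((ENNReal.Tendsto.const_mul tendsto_id (Or.inr measure_ball_lt_top.ne)).add_const _).mono_left
      nhdsWithin_le_nhds
  rw [mul_zero, zero_add] at hlim
  exact ge_of_tendsto hlim (eventually_mem_nhdsWithin.mono fun ε hε => hiso x r hr A hA ε hε.ne')

theorem SupportsPoincare.measure_eq_zero_or_compl_of_perimeter_eq_zero (h : SupportsPoincare μ)
    {A : Set X} (hA : MeasurableSet A) (hP : perimeter μ A univ = 0) : μ A = 0 ∨ μ Aᶜ = 0 := by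
  obtain ⟨C, lam, hlam, hiso⟩ := h.exists_relative_isoperimetric
  have hball : ∀ (x : X) (r : ℝ), 0 < r → μ (A ∩ ball x r) = 0 ∨ μ (Aᶜ ∩ ball x r) = 0 := by
    intro x r hr
    have hzero : μ (ball x (lam * r)) * min (μ (A ∩ ball x r)) (μ (Aᶜ ∩ ball x r)) = 0 := by
      simpa only [hP, mul_zero, nonpos_iff_eq_zero] using hiso x r hr A hA
    rcases mul_eq_zero.1 hzero with hlarge | hmin
    · have hsub : A ∩ ball x r ⊆ ball x (lam * r) :=
        inter_subset_right.trans (ball_subset_ball (le_mul_of_one_le_left hr.le hlam))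
      exact Or.inl (measure_mono_null hsub hlarge)
    · exact min_eq_zero.1 hmin
  by_contra! hne
  have hpos : ∀ B : Set X, μ B ≠ 0 → ∀ x, ∃ n : ℕ, 0 < μ (B ∩ ball x n) := fun B hB x =>
    exists_measure_pos_of_not_measure_iUnion_null (by rwa [← inter_iUnion, iUnion_ball_nat,
      inter_univ])
  obtain ⟨x, -⟩ := nonempty_of_measure_ne_zero hne.1
  obtain ⟨n₁, hn₁⟩ := hpos A hne.1 x
  obtain ⟨n₂, hn₂⟩ := hpos Aᶜ hne.2 x
  set r : ℝ := n₁ + n₂ + 1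
  have hr₁ : ball x n₁ ⊆ ball x r :=
    ball_subset_ball (by linarith [n₁.cast_nonneg (α := ℝ), n₂.cast_nonneg (α := ℝ)])
  have hr₂ : ball x n₂ ⊆ ball x r :=
    ball_subset_ball (by linarith [n₁.cast_nonneg (α := ℝ), n₂.cast_nonneg (α := ℝ)])
  rcases hball x r (by positivity) with h | h
  · exact hn₁.ne' (measure_mono_null (inter_subset_inter_right A hr₁) h)
  · exact hn₂.ne' (measure_mono_null (inter_subset_inter_right Aᶜ hr₂) h)

theorem SupportsPoincare.isIndecomposableIn_univ (h : SupportsPoincare μ) :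
    IsIndecomposableIn μ (univ : Set X) univ := by
  rintro ⟨A, B, hA, -, hAB, -, -, -, hμA, hμB, hP⟩
  rw [perimeter_univ_univ, eq_comm, add_eq_zero] at hP
  rcases h.measure_eq_zero_or_compl_of_perimeter_eq_zero hA hP.1 with h | h
  · exact hμA.ne' h
  · exact hμB.ne' (measure_mono_null hAB.subset_compl_left h)

end Poincare

section Indecomposable

variable {X : Type*} [MetricSpace X] [MeasurableSpace X] {μ : Measure X}

theorem IsIndecomposableIn.measure_eq_zero_of_perimeter_eq_add {E A B : Set X}
    (h : IsIndecomposableIn μ E univ) (hA : MeasurableSet A) (hB : MeasurableSet B)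
    (hAB : Disjoint A B) (hE : A ∪ B = E) (hP : perimeter μ E univ =
      perimeter μ A univ + perimeter μ B univ) (hfin : perimeter μ E univ ≠ ⊤) :
    μ A = 0 ∨ μ B = 0 := by
  by_contra! hne
  have hfin' := ENNReal.add_ne_top.1 (hP ▸ hfin)
  exact h ⟨A, B, hA, hB, hAB, by rw [hE, inter_univ], hfin'.1.lt_top, hfin'.2.lt_top,
    pos_iff_ne_zero.2 hne.1, pos_iff_ne_zero.2 hne.2, hP⟩

theorem IsIndecomposableIn.measure_eq_zero_or_compl_of_perimeter_eq_zero
    (hX : IsIndecomposableIn μ (univ : Set X) univ) {A : Set X} (hA : MeasurableSet A)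
    (hP : perimeter μ A univ = 0) : μ A = 0 ∨ μ Aᶜ = 0 := by
  refine hX.measure_eq_zero_of_perimeter_eq_add hA hA.compl disjoint_compl_right
    (union_compl_self A) ?_ ?_ <;> simp [perimeter_univ_univ, perimeter_compl, hP]

theorem perimeter_eq_zero_of_perimeter_union_eq_add {A B : Set X} (hAB : Disjoint A B)
    (hfin : perimeter μ A univ ≠ ⊤)
    (h : perimeter μ (A ∪ B) univ = perimeter μ A univ + perimeter μ B univ)
    (h' : perimeter μ (B ∪ (A ∪ B)ᶜ) univ = perimeter μ B univ + perimeter μ (A ∪ B)ᶜ univ) :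
    perimeter μ B univ = 0 := by
  have hA : B ∪ (A ∪ B)ᶜ = Aᶜ := by
    rw [compl_union, union_inter_distrib_left, union_compl_self, inter_univ,
      union_eq_self_of_subset_left hAB.subset_compl_left]
  rw [hA, perimeter_compl, perimeter_compl, h, add_left_comm] at h'
  have hB : perimeter μ B univ + perimeter μ B univ = 0 :=
    (ENNReal.add_right_inj hfin).1 (h'.symm.trans (add_zero _).symm)
  exact (add_eq_zero.1 hB).1

variable [BorelSpace X] [WeaklyLocallyCompactSpace X] [SigmaCompactSpace X]

theorem perimeter_union_eq_add_of_subset_left {A A' B : Set X}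
    (hA : MeasurableSet A) (hA' : MeasurableSet A') (hB : MeasurableSet B) (hsub : A' ⊆ A)
    (hAB : Disjoint A B) (hfin : perimeter μ A univ ≠ ⊤)
    (h : perimeter μ (A ∪ B) univ = perimeter μ A univ + perimeter μ B univ) :
    perimeter μ (A' ∪ B) univ = perimeter μ A' univ + perimeter μ B univ := by
  refine (perimeter_union_le hA' hB).antisymm ((ENNReal.add_le_add_iff_left hfin).1 ?_)
  have hunion : A ∪ (A' ∪ B) = A ∪ B := by
    rw [← union_assoc, union_eq_self_of_subset_right hsub]
  have hinter : A ∩ (A' ∪ B) = A' := by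
    rw [inter_union_distrib_left, hAB.inter_eq, union_empty, inter_eq_self_of_subset_right hsub]
  calc perimeter μ A univ + (perimeter μ A' univ + perimeter μ B univ)
      = perimeter μ (A ∪ (A' ∪ B)) univ + perimeter μ (A ∩ (A' ∪ B)) univ := by
        rw [hunion, hinter, h]; ring
    _ ≤ perimeter μ A univ + perimeter μ (A' ∪ B) univ :=
        perimeter_union_add_perimeter_inter_le hA (hA'.union hB)

theorem perimeter_union_eq_add_of_subset {A A' B B' : Set X}
    (hA : MeasurableSet A) (hA' : MeasurableSet A') (hB : MeasurableSet B)
    (hB' : MeasurableSet B') (hsubA : A' ⊆ A) (hsubB : B' ⊆ B) (hAB : Disjoint A B)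
    (hfinA : perimeter μ A univ ≠ ⊤) (hfinB : perimeter μ B univ ≠ ⊤)
    (h : perimeter μ (A ∪ B) univ = perimeter μ A univ + perimeter μ B univ) :
    perimeter μ (A' ∪ B') univ = perimeter μ A' univ + perimeter μ B' univ := by
  have hA'B := perimeter_union_eq_add_of_subset_left hA hA' hB hsubA hAB hfinA h
  rw [union_comm, add_comm] at hA'B ⊢
  exact perimeter_union_eq_add_of_subset_left hB hB' hA' hsubB (hAB.symm.mono_right hsubA) hfinB
    hA'B

theorem IsIndecomposableIn.measure_inter_eq_zero_of_subset_union {E A B : Set X}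
    (h : IsIndecomposableIn μ E univ) (hE : MeasurableSet E) (hA : MeasurableSet A)
    (hB : MeasurableSet B) (hAB : Disjoint A B) (hEAB : E ⊆ A ∪ B)
    (hEfin : perimeter μ E univ ≠ ⊤)
    (hP : perimeter μ (A ∪ B) univ = perimeter μ A univ + perimeter μ B univ)
    (hfin : perimeter μ (A ∪ B) univ ≠ ⊤) : μ (E ∩ A) = 0 ∨ μ (E ∩ B) = 0 := by
  obtain ⟨hfinA, hfinB⟩ := ENNReal.add_ne_top.1 (hP ▸ hfin)
  have hunion : E ∩ A ∪ E ∩ B = E := by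
    rw [← inter_union_distrib_left, inter_eq_self_of_subset_left hEAB]
  refine h.measure_eq_zero_of_perimeter_eq_add (hE.inter hA) (hE.inter hB)
    (hAB.mono inter_subset_right inter_subset_right) hunion ?_ hEfin
  simpa only [hunion] using perimeter_union_eq_add_of_subset hA (hE.inter hA) hB (hE.inter hB)
    inter_subset_right inter_subset_right hAB hfinA hfinB hP

theorem perimeter_eq_zero_of_ae_le {A B D : Set X} (hA : MeasurableSet A) (hB : MeasurableSet B)
    (hD : MeasurableSet D) (hAB : Disjoint A B) (hBD : B ≤ᵐ[μ] D) (hDAB : D ⊆ A ∪ B)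
    (hAfin : perimeter μ A univ ≠ ⊤) (hDfin : perimeter μ D univ ≠ ⊤)
    (h : perimeter μ (A ∪ B) univ = perimeter μ A univ + perimeter μ B univ)
    (h' : perimeter μ (D ∪ (A ∪ B)ᶜ) univ = perimeter μ D univ + perimeter μ (A ∪ B)ᶜ univ) :
    perimeter μ B univ = 0 := by
  have hBae : B =ᵐ[μ] (B ∩ D : Set X) :=
    EventuallyLE.antisymm (hBD.mono fun _ hx hxB => ⟨hxB, hx hxB⟩) inter_subset_left.eventuallyLE
  have hBCae : (B ∪ (A ∪ B)ᶜ : Set X) =ᵐ[μ] (B ∩ D ∪ (A ∪ B)ᶜ : Set X) :=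
    hBae.union (ae_eq_refl _)
  refine perimeter_eq_zero_of_perimeter_union_eq_add hAB hAfin h ?_
  rw [perimeter_congr_ae hBCae, perimeter_congr_ae hBae]
  exact perimeter_union_eq_add_of_subset_left hD (hB.inter hD) (hA.union hB).compl
    inter_subset_right (disjoint_compl_right.mono_left hDAB) hDfin h'

theorem IsIndecomposableIn.union_of_perimeter_eq_add {E D : Set X}
    (hX : IsIndecomposableIn μ (univ : Set X) univ) (hE : IsIndecomposableIn μ E univ)
    (hEm : MeasurableSet E) (hDm : MeasurableSet D) (hED : Disjoint E D)
    (hEfin : perimeter μ E univ ≠ ⊤)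
    (hP : perimeter μ E univ = perimeter μ D univ + perimeter μ (E ∪ D) univ) :
    IsIndecomposableIn μ (E ∪ D) univ := by
  obtain ⟨hDfin, hEDfin⟩ := ENNReal.add_ne_top.1 (hP ▸ hEfin)
  have hDc : D ∪ (E ∪ D)ᶜ = Eᶜ := by
    rw [compl_union, union_inter_distrib_left, union_compl_self, inter_univ,
      union_eq_self_of_subset_left hED.subset_compl_left]
  have hPc : perimeter μ (D ∪ (E ∪ D)ᶜ) univ =
      perimeter μ D univ + perimeter μ (E ∪ D)ᶜ univ := by
    rw [hDc, perimeter_compl, perimeter_compl, hP]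
  have hinter : ∀ A B : Set X, MeasurableSet A → MeasurableSet B → Disjoint A B →
      A ∪ B = E ∪ D → perimeter μ A univ ≠ ⊤ →
      perimeter μ (E ∪ D) univ = perimeter μ A univ + perimeter μ B univ →
      0 < μ A → 0 < μ B → μ (E ∩ B) ≠ 0 := by
    intro A B hA hB hAB hABED hAfin hPAB hμA hμB hEB
    have hBD : B ≤ᵐ[μ] D := by
      have hsub : B \ D ⊆ E ∩ B := fun x hx =>
        ⟨(hABED.subset (mem_union_right A hx.1)).resolve_right hx.2, hx.1⟩
      exact ae_le_set.2 (measure_mono_null hsub hEB)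
    rw [← hABED] at hPAB hPc
    have hPB : perimeter μ B univ = 0 := perimeter_eq_zero_of_ae_le hA hB hDm hAB hBD
      (subset_union_right.trans hABED.superset) hAfin hDfin hPAB hPc
    rcases hX.measure_eq_zero_or_compl_of_perimeter_eq_zero hB hPB with h | h
    · exact hμB.ne' h
    · exact hμA.ne' (measure_mono_null hAB.subset_compl_right h)
  rintro ⟨A, B, hA, hB, hAB, hABED, hAfin, hBfin, hμA, hμB, hPAB⟩
  rw [inter_univ] at hABED
  rcases hE.measure_inter_eq_zero_of_subset_union hEm hA hB hAB
    (subset_union_left.trans hABED.superset) hEfin (hABED ▸ hPAB) (hABED ▸ hEDfin) with h | h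
  · exact hinter B A hB hA hAB.symm (by rw [union_comm, hABED]) hBfin.ne (by rw [hPAB, add_comm])
      hμB hμA h
  · exact hinter A B hA hB hAB hABED hAfin.ne hPAB hμA hμB h

end Indecomposable

theorem indecomposable_union_complement_components_general {ι X : Type*} [MetricSpace X]
    [WeaklyLocallyCompactSpace X] [SigmaCompactSpace X] [MeasurableSpace X] [BorelSpace X]
    {μ : Measure X} [IsFiniteMeasureOnCompacts μ]
    (hX : IsIndecomposableIn μ (univ : Set X) univ) {E : Set X} (hE : MeasurableSet E)
    (hEfin : perimeter μ E univ ≠ ⊤) (hindec : IsIndecomposableIn μ E univ)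
    {I : Set ι} (hI : I.Countable) {G : ι → Set X} (hGm : ∀ i ∈ I, MeasurableSet (G i))
    (hGd : I.PairwiseDisjoint G) (hGE : ⋃ i ∈ I, G i = Eᶜ)
    (hsum : ∑' i : I, perimeter μ (G i) univ ≤ perimeter μ E univ) {J : Set ι} (hJ : J ⊆ I) :
    IsIndecomposableIn μ (E ∪ ⋃ i ∈ J, G i) univ ∧
      perimeter μ (E ∪ ⋃ i ∈ J, G i) univ ≤ perimeter μ E univ := by
  set D := ⋃ i ∈ J, G i
  have hDm : MeasurableSet D := .biUnion (hI.mono hJ) fun i hi => hGm i (hJ hi)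
  have hED : Disjoint E D :=
    subset_compl_iff_disjoint_left.1 ((biUnion_subset_biUnion_left hJ).trans hGE.subset)
  have hC : ⋃ i ∈ I \ J, G i = (E ∪ D)ᶜ := by
    rw [← biUnion_sdiff_biUnion_eq (by rwa [union_eq_self_of_subset_right hJ]), hGE, compl_union,
      sdiff_eq]
  have hP : perimeter μ E univ = perimeter μ D univ + perimeter μ (E ∪ D) univ := by
    rw [← perimeter_compl E, ← perimeter_compl (E ∪ D), ← hC, ← hGE]
    exact perimeter_biUnion_eq_add_of_tsum_le hI hGm (by rwa [hGE, perimeter_compl]) hJ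
  exact ⟨hX.union_of_perimeter_eq_add hindec hE hDm hED hEfin hP, hP ▸ le_add_self⟩

/-- **Proposition 4.5.** If `E` is indecomposable and `{G_i}_{i ∈ I} = 𝒞𝒞ᵉ(X ∖ E)`,
then for any `J ⊆ I` the set `E ∪ ⋃_{i ∈ J} G_i` is indecomposable, with
perimeter at most `P(E, X)`. -/
theorem indecomposable_union_complement_components
    [ProperSpace X] (μ : Measure X)
    (hball : ∀ (x : X) (r : ℝ), 0 < r → 0 < μ (ball x r) ∧ μ (ball x r) < ⊤)
    (hPI : IsPISpace μ)
    (E : Set X) (hE : MeasurableSet E) (hEfin : perimeter μ E Set.univ < ⊤)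
    (hindec : IsIndecomposableIn μ E Set.univ)
    (hcompfin : perimeter μ (Set.univ \ E) Set.univ < ⊤)
    (I : Set ℕ) (G : ℕ → Set X)
    (hdec : IsEssentialPartition μ (Set.univ \ E) I G) :
    ∀ J : Set ℕ, J ⊆ I →
      IsIndecomposableIn μ (E ∪ ⋃ i ∈ J, G i) Set.univ ∧
      perimeter μ (E ∪ ⋃ i ∈ J, G i) Set.univ ≤ perimeter μ E Set.univ := by
  intro J hJ
  obtain ⟨hGm, hGd, hGE, -, -, -, hsum⟩ := hdec
  rw [← compl_eq_univ_sdiff] at hGE hsum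
  have : IsLocallyFiniteMeasure μ :=
    ⟨fun x => ⟨ball x 1, ball_mem_nhds x one_pos, (hball x 1 one_pos).2⟩⟩
  exact indecomposable_union_complement_components_general hPI.2.2.isIndecomposableIn_univ hE
    hEfin.ne hindec I.to_countable hGm (fun i hi j hj hij => hGd i hi j hj hij) hGE
    (hsum.symm.trans (perimeter_compl E)).le hJ
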